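/- Let O = (b,d,u) be a Subjective Logic opinion with u < 1, and let P = (x_O, y_O) = ((2d+u)/√3, u). Then the Euclidean angle ∠PUD at the vertex U = (1/√3,1), where D = (2/√3,0), equals arcsin(b/√((1/3)·(1+d−u)² + b²)). -/

import Mathlib

/-!
With `B`, `D`, `U` as vertices the opinion triangle is equilateral with altitude `1`, so `b` is
the distance from `P` to the side `UD` and `sin ∠PUD = b / |PU|`. The angle is at most `π / 2`,
because `⟪P - U, D - U⟫ = 2 / 3 * (1 + d - u)` is nonnegative, so `arcsin` recovers it from its
sine.
-/

open InnerProductGeometry Real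
open scoped RealInnerProductSpace

theorem arcsin_sin_angle {V : Type*} [NormedAddCommGroup V] [InnerProductSpace ℝ V] {x y : V}
    (hxy : 0 ≤ ⟪x, y⟫) : arcsin (sin (angle x y)) = angle x y := by
  have hacute : angle x y ≤ π / 2 := arccos_le_pi_div_two.mpr (div_nonneg hxy (by positivity))
  exact arcsin_sin (by linarith [angle_nonneg x y, pi_pos]) hacute

/-- The determinant with columns `x` and `y`, that is, the signed area of the parallelogram they
span. The explicit formula avoids fixing an `Orientation` of the plane. -/
def planarDet (x y : EuclideanSpace ℝ (Fin 2)) : ℝ :=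
  x 0 * y 1 - x 1 * y 0

section planarDet

variable {x y : EuclideanSpace ℝ (Fin 2)}

theorem inner_mul_inner_sub_inner_mul_inner_eq_planarDet_sq :
    ⟪x, x⟫ * ⟪y, y⟫ - ⟪x, y⟫ * ⟪x, y⟫ = planarDet x y ^ 2 := by
  simp only [planarDet, PiLp.inner_apply, Fin.sum_univ_two, RCLike.inner_apply, conj_trivial]
  ring

theorem sin_angle_mul_norm_mul_norm_eq_abs_planarDet :
    sin (angle x y) * (‖x‖ * ‖y‖) = |planarDet x y| := by
  rw [sin_angle_mul_norm_mul_norm, inner_mul_inner_sub_inner_mul_inner_eq_planarDet_sq,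
    sqrt_sq_eq_abs]

theorem angle_eq_arcsin_planarDet (hx : x ≠ 0) (hy : y ≠ 0) (hxy : 0 ≤ ⟪x, y⟫) :
    angle x y = arcsin (|planarDet x y| / (‖x‖ * ‖y‖)) := by
  have hnorm : ‖x‖ * ‖y‖ ≠ 0 := mul_ne_zero (norm_ne_zero_iff.mpr hx) (norm_ne_zero_iff.mpr hy)
  rw [← sin_angle_mul_norm_mul_norm_eq_abs_planarDet, mul_div_cancel_right₀ _ hnorm,
    arcsin_sin_angle hxy]

end planarDet

/-- The point of the plane representing the opinion with disbelief `d` and uncertainty `u`. Since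
the vertex `B` is the origin, this is `d • D + u • U`, which is linear in `(d, u)`; so differences
of such points are again of this form, and `d`, `u` range over all reals. -/
noncomputable def opinionPoint (d u : ℝ) : EuclideanSpace ℝ (Fin 2) :=
  !₂[(2 * d + u) / √3, u]

section opinionPoint

variable (d u d' u' : ℝ)

theorem opinionPoint_sub_opinionPoint :
    opinionPoint d u - opinionPoint d' u' = opinionPoint (d - d') (u - u') := by
  ext i
  fin_cases i
  · simp only [opinionPoint, Fin.zero_eta, PiLp.sub_apply, Matrix.cons_val_zero]
    ring
  · simp only [opinionPoint, Fin.mk_one, PiLp.sub_apply, Matrix.cons_val_one,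
      Matrix.cons_val_fin_one]

theorem inner_opinionPoint_opinionPoint :
    ⟪opinionPoint d u, opinionPoint d' u'⟫
      = 4 / 3 * (d * d' + u * u') + 2 / 3 * (d * u' + u * d') := by
  have h3 : √3 ^ 2 = 3 := sq_sqrt (by norm_num)
  simp only [opinionPoint, PiLp.inner_apply, RCLike.inner_apply, conj_trivial, Fin.sum_univ_two,
    Matrix.cons_val_zero, Matrix.cons_val_one, Matrix.cons_val_fin_one]
  field_simp
  rw [h3]
  ring

theorem norm_opinionPoint : ‖opinionPoint d u‖ = √(1 / 3 * (d - u) ^ 2 + (d + u) ^ 2) := by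
  rw [norm_eq_sqrt_real_inner, inner_opinionPoint_opinionPoint]
  congr 1
  ring

theorem planarDet_opinionPoint_opinionPoint :
    planarDet (opinionPoint d u) (opinionPoint d' u') = 2 / √3 * (d * u' - u * d') := by
  simp only [planarDet, opinionPoint, Matrix.cons_val_zero, Matrix.cons_val_one,
    Matrix.cons_val_fin_one]
  ring

variable {u} in
theorem opinionPoint_ne_zero (hu : u ≠ 0) : opinionPoint d u ≠ 0 :=
  fun h => hu (congrArg (· 1) h)

theorem norm_opinionPoint_one_neg_one : ‖opinionPoint 1 (-1)‖ = 2 / √3 := by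
  rw [norm_opinionPoint, show (1 / 3 * (1 - -1) ^ 2 + (1 + -1) ^ 2 : ℝ) = 2 ^ 2 / 3 by norm_num,
    sqrt_div (by norm_num), sqrt_sq (by norm_num)]

end opinionPoint

theorem stmt6_general {b d u : ℝ} (hb : 0 ≤ b) (hdu : 0 ≤ 1 + d - u) (hsum : b + d + u = 1)
    (hu1 : u < 1) {P U D : EuclideanSpace ℝ (Fin 2)} (hP : P = ![(2 * d + u) / √3, u])
    (hU : U = ![1 / √3, 1]) (hD : D = ![2 / √3, 0]) :
    EuclideanGeometry.angle P U D = arcsin (b / √((1 / 3) * (1 + d - u) ^ 2 + b ^ 2)) := by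
  obtain rfl : P = opinionPoint d u := WithLp.ofLp_injective 2 hP
  obtain rfl : U = opinionPoint 0 1 := WithLp.ofLp_injective 2 (by simpa [opinionPoint] using hU)
  obtain rfl : D = opinionPoint 1 0 := WithLp.ofLp_injective 2 (by simpa [opinionPoint] using hD)
  have hPU : opinionPoint d u -ᵥ opinionPoint 0 1 = opinionPoint d (u - 1) := by
    rw [vsub_eq_sub, opinionPoint_sub_opinionPoint, sub_zero]
  have hDU : opinionPoint 1 0 -ᵥ opinionPoint 0 1 = opinionPoint 1 (-1) := by
    rw [vsub_eq_sub, opinionPoint_sub_opinionPoint, sub_zero, zero_sub]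
  have hacute : 0 ≤ ⟪opinionPoint d (u - 1), opinionPoint 1 (-1)⟫ := by
    rw [inner_opinionPoint_opinionPoint]
    linarith
  have hnorm : ‖opinionPoint d (u - 1)‖ = √((1 / 3) * (1 + d - u) ^ 2 + b ^ 2) := by
    obtain rfl : b = 1 - d - u := by linarith
    rw [norm_opinionPoint]
    congr 1
    ring
  have hheight : d * -1 - (u - 1) * 1 = b := by linarith
  rw [EuclideanGeometry.angle, hPU, hDU, angle_eq_arcsin_planarDet
    (opinionPoint_ne_zero d (by linarith)) (opinionPoint_ne_zero 1 (by norm_num)) hacute,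
    planarDet_opinionPoint_opinionPoint, hheight, abs_of_nonneg (by positivity), hnorm,
    norm_opinionPoint_one_neg_one, mul_comm (2 / √3), mul_div_mul_right _ _ (by positivity)]

/-- For an opinion (b,d,u) with u < 1 and P = ((2d+u)/√3, u), the angle ∠PUD at
U = (1/√3,1), where D = (2/√3,0), equals arcsin(b/√((1/3)·(1+d−u)² + b²)). -/
theorem stmt6 (b d u : ℝ) (hb : 0 ≤ b) (hd : 0 ≤ d) (hu : 0 ≤ u) (hsum : b + d + u = 1)
    (hu1 : u < 1) (P U D : EuclideanSpace ℝ (Fin 2))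
    (hP : P = ![(2 * d + u) / Real.sqrt 3, u])
    (hU : U = ![1 / Real.sqrt 3, 1]) (hD : D = ![2 / Real.sqrt 3, 0]) :
    EuclideanGeometry.angle P U D
      = Real.arcsin (b / Real.sqrt ((1/3) * (1 + d - u)^2 + b^2)) :=
  stmt6_general hb (by linarith) hsum hu1 hP hU hD
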